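/- arXiv:2410.01600 — 2 statements merged into one kernel-verified Lean document; each statement's English description precedes it below -/
import Mathlib

section
/- Let n ≥ 1 be a natural number, and let a, b be integers with 0 ≤ a, a < 2b, and b ≤ n. Let ε and M be real numbers with 0 < ε < 1 and M ≥ 2n/ε. Then max 0 ((a : ℝ) − M · max 0 ((a : ℝ) − (b : ℝ) + ε)) + max 0 ((a : ℝ) − (b : ℝ)) equals (a : ℝ) if a < b, and equals (a : ℝ) − (b : ℝ) if a ≥ b. -/
/-!
The first ReLU must return `a` or `0` according to whether `a < b`. The inner ReLU supplies the
switch: distinct integers differ by at least `1 > ε`, so `a - b + ε` is nonpositive when `a < b`,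
and it is at least `ε` when `b ≤ a`. In the latter case the penalty is at least `M * ε ≥ 2 * n`,
which exceeds `a` because `a < 2 * b` and `b ≤ n`.
-/

/-- A ReLU unit `x ↦ max 0 x` with a suppressing input: the control `t` is rectified, amplified by
the weight `M` and subtracted from `x`, so that `t ≤ 0` lets `x` through and large `t` blocks it. -/
def reluGate {R : Type*} [Ring R] [LinearOrder R] (M t x : R) : R :=
  max 0 (x - M * max 0 t)

section

variable {R : Type*} [Ring R] [LinearOrder R] {M t x y ε : R}

theorem reluGate_eq_self_of_nonpos (ht : t ≤ 0) (hx : 0 ≤ x) : reluGate M t x = x := by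
  rw [reluGate, max_eq_left ht, mul_zero, sub_zero, max_eq_right hx]

theorem reluGate_eq_zero_of_le_mul [IsOrderedAddMonoid R] (ht : 0 ≤ t) (hx : x ≤ M * t) :
    reluGate M t x = 0 := by
  rw [reluGate, max_eq_right ht, max_eq_left (sub_nonpos.2 hx)]

theorem relu_implements_bounded_mod_general [IsStrictOrderedRing R]
    (hx : 0 ≤ x) (hε : 0 < ε) (hM : x ≤ M * ε) :
    (x + ε ≤ y → reluGate M (x - y + ε) x + max 0 (x - y) = x) ∧
      (y ≤ x → reluGate M (x - y + ε) x + max 0 (x - y) = x - y) := by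
  constructor
  · intro hxy
    have h_control : x - y + ε ≤ 0 := by rwa [sub_add_eq_add_sub, sub_nonpos]
    have h_diff : x - y ≤ 0 := sub_nonpos.2 ((le_add_of_nonneg_right hε.le).trans hxy)
    rw [reluGate_eq_self_of_nonpos h_control hx, max_eq_left h_diff, add_zero]
  · intro hyx
    have h_diff : 0 ≤ x - y := sub_nonneg.2 hyx
    have hM_nonneg : 0 ≤ M := nonneg_of_mul_nonneg_left (hx.trans hM) hε
    have h_penalty : x ≤ M * (x - y + ε) :=
      hM.trans (mul_le_mul_of_nonneg_left (le_add_of_nonneg_left h_diff) hM_nonneg)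
    rw [reluGate_eq_zero_of_le_mul (add_nonneg h_diff hε.le) h_penalty, max_eq_right h_diff,
      zero_add]

theorem intCast_add_le_intCast [IsStrictOrderedRing R] {a b : ℤ} (hε : ε ≤ 1) (h : a < b) :
    (a : R) + ε ≤ b :=
  calc (a : R) + ε ≤ a + 1 := by gcongr
    _ ≤ b := mod_cast h

end

/-- The bounded modular-reduction function `g(a,b)` (equal to `a` if `a < b`, and
`a - b` if `a ≥ b`) can be written using linear operations and ReLU:
`g(a,b) = ReLU(a - M * ReLU(a - b + ε)) + ReLU(a - b)`. -/
theorem relu_implements_bounded_mod (n : ℕ) (hn : 1 ≤ n) (a b : ℤ)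
    (ha : 0 ≤ a) (hab : a < 2 * b) (hbn : b ≤ (n : ℤ))
    (ε M : ℝ) (hε0 : 0 < ε) (hε1 : ε < 1) (hM : M ≥ 2 * n / ε) :
    (a < b →
      max 0 ((a : ℝ) - M * max 0 ((a : ℝ) - (b : ℝ) + ε)) + max 0 ((a : ℝ) - (b : ℝ))
        = (a : ℝ)) ∧
    (b ≤ a →
      max 0 ((a : ℝ) - M * max 0 ((a : ℝ) - (b : ℝ) + ε)) + max 0 ((a : ℝ) - (b : ℝ))
        = (a : ℝ) - (b : ℝ)) := by
  have ha_le : (a : ℝ) ≤ 2 * n := mod_cast (by lia : a ≤ 2 * n)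
  obtain ⟨h_lt, h_ge⟩ := relu_implements_bounded_mod_general (y := (b : ℝ))
    (Int.cast_nonneg ha) hε0 (ha_le.trans ((div_le_iff₀ hε0).1 hM))
  exact ⟨fun h ↦ h_lt (intCast_add_le_intCast hε1.le h), fun h ↦ h_ge (Int.cast_le.2 h)⟩
end

section
/- Fix D and n, let A : (Fin n → EuclideanSpace ℝ (Fin D)) → (Fin n → EuclideanSpace ℝ (Fin D)) be any map satisfying A(x ∘ σ) = A(x) ∘ σ for every permutation σ of Fin n, and let p : Fin n → EuclideanSpace ℝ (Fin D) be positional embeddings with p i₀ = p i₁ for two distinct indices i₀, i₁. Define E(x) = A(fun i => x i + p i). Then for every sequence x and every index j with j ≠ i₀ and j ≠ i₁, one has E(x ∘ Equiv.swap i₀ i₁) j = E(x) j. -/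
section Encoder

open Equiv Function

variable {ι M N : Type*} [Add M] {A : (ι → M) → ι → N} {p : ι → M} {σ : ι → ι}

/-- The encoder with positional embeddings `p` obtained from a sequence map `A`, by adding `p i` to
the `i`-th token first. Input and output tokens may live in different types. -/
def posEmbEncoder (A : (ι → M) → ι → N) (p x : ι → M) : ι → N :=
  A (x + p)

theorem semiconj_add_right_comp_of_comp_eq (hp : p ∘ σ = p) :
    Semiconj (· + p) (· ∘ σ) (· ∘ σ) := fun x =>
  calc
    x ∘ σ + p = x ∘ σ + p ∘ σ := by rw [hp]
    _ = (x + p) ∘ σ := (Pi.add_comp x p σ).symm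

theorem semiconj_posEmbEncoder_comp (hA : Semiconj A (· ∘ σ) (· ∘ σ)) (hp : p ∘ σ = p) :
    Semiconj (posEmbEncoder A p) (· ∘ σ) (· ∘ σ) :=
  hA.comp_left (semiconj_add_right_comp_of_comp_eq hp)

theorem encoder_equal_posEmb_swap_invariant_general [DecidableEq ι] {i₀ i₁ : ι}
    (hA : Semiconj A (· ∘ swap i₀ i₁) (· ∘ swap i₀ i₁)) (hp : p i₀ = p i₁)
    (x : ι → M) {j : ι} (hj₀ : j ≠ i₀) (hj₁ : j ≠ i₁) :
    posEmbEncoder A p (x ∘ swap i₀ i₁) j = posEmbEncoder A p x j := by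
  have hp_swap : p ∘ swap i₀ i₁ = p := funext (apply_swap_eq_self hp)
  calc
    posEmbEncoder A p (x ∘ swap i₀ i₁) j = posEmbEncoder A p x (swap i₀ i₁ j) :=
      congrFun (semiconj_posEmbEncoder_comp hA hp_swap x) j
    _ = posEmbEncoder A p x j := by rw [swap_apply_of_ne_of_ne hj₀ hj₁]

end Encoder

/-- If `A` is permutation-equivariant and the positional embeddings at two distinct
positions `i₀, i₁` coincide, then the encoder `E(x) = A(fun i => x i + p i)` gives
the same output at any other position `j` when the tokens at `i₀` and `i₁` are
swapped. -/
theorem encoder_equal_posEmb_swap_invariant (D n : ℕ)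
    (A : (Fin n → EuclideanSpace ℝ (Fin D)) → (Fin n → EuclideanSpace ℝ (Fin D)))
    (hA : ∀ (σ : Equiv.Perm (Fin n)) (x : Fin n → EuclideanSpace ℝ (Fin D)),
      A (x ∘ σ) = A x ∘ σ)
    (p : Fin n → EuclideanSpace ℝ (Fin D))
    (i₀ i₁ : Fin n) (hne : i₀ ≠ i₁) (hp : p i₀ = p i₁)
    (x : Fin n → EuclideanSpace ℝ (Fin D)) (j : Fin n) (hj₀ : j ≠ i₀) (hj₁ : j ≠ i₁) :
    A (fun i => (x ∘ Equiv.swap i₀ i₁) i + p i) j = A (fun i => x i + p i) j :=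
  encoder_equal_posEmb_swap_invariant_general (hA (Equiv.swap i₀ i₁)) hp x hj₀ hj₁
end
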